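/- Let A be a finite-dimensional left Leibniz algebra over a field F of characteristic zero and let R = rad(A) be its radical. Then A² ∩ R = A·R + R·A. -/

import Mathlib

open Submodule

section LeibnizDefs

variable {F : Type*} {A : Type*} [Field F] [AddCommGroup A] [Module F A]

/-- The span of all products `b*c` with `b ∈ B`, `c ∈ C`. -/
def mulSub (mul : A →ₗ[F] A →ₗ[F] A) (B C : Submodule F A) : Submodule F A :=
  Submodule.span F {z : A | ∃ b ∈ B, ∃ c ∈ C, mul b c = z}

/-- `fSub mul B C = B·C + C·B`, the function `f(B,C)`. -/
def fSub (mul : A →ₗ[F] A →ₗ[F] A) (B C : Submodule F A) : Submodule F A :=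
  mulSub mul B C ⊔ mulSub mul C B

/-- `fIter mul B C n = f^{n+1}(B,C)` (so index `0` is `f^1(B,C) = f(B,C)`). -/
def fIter (mul : A →ₗ[F] A →ₗ[F] A) (B C : Submodule F A) : ℕ → Submodule F A
  | 0 => fSub mul B C
  | n + 1 => fSub mul B (fIter mul B C n)

/-- `lcs mul B n = B^{n+1}`, the lower central series (index `0` is `B^1 = B`). -/
def lcs (mul : A →ₗ[F] A →ₗ[F] A) (B : Submodule F A) : ℕ → Submodule F A
  | 0 => B
  | n + 1 => mulSub mul B (lcs mul B n)

/-- `ds mul B n = B^{(n+1)}`, the derived series (index `0` is `B^{(1)} = B`). -/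
def ds (mul : A →ₗ[F] A →ₗ[F] A) (B : Submodule F A) : ℕ → Submodule F A
  | 0 => B
  | n + 1 => mulSub mul (ds mul B n) (ds mul B n)

/-- `B^ω = ⋂_{i ≥ 1} B^i`. -/
def omegaSub (mul : A →ₗ[F] A →ₗ[F] A) (B : Submodule F A) : Submodule F A :=
  ⨅ n, lcs mul B n

/-- `B` is a subalgebra: a subspace closed under multiplication. -/
def IsSubalg (mul : A →ₗ[F] A →ₗ[F] A) (B : Submodule F A) : Prop :=
  ∀ x ∈ B, ∀ y ∈ B, mul x y ∈ B

/-- `I` is an ideal of the subalgebra `S`: `I ⊆ S` and `xI + Ix ⊆ I` for all `x ∈ S`. -/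
def IsIdealIn (mul : A →ₗ[F] A →ₗ[F] A) (I S : Submodule F A) : Prop :=
  I ≤ S ∧ ∀ x ∈ S, ∀ y ∈ I, mul x y ∈ I ∧ mul y x ∈ I

/-- `B` is subinvariant in `S`: there is a chain of subalgebras
`B = c 0 ⊆ c 1 ⊆ ⋯ ⊆ c t = S` with each term an ideal of the next. -/
def IsSubinvariantIn (mul : A →ₗ[F] A →ₗ[F] A) (B S : Submodule F A) : Prop :=
  ∃ (t : ℕ) (c : ℕ → Submodule F A), c 0 = B ∧ c t = S ∧
    (∀ i ≤ t, IsSubalg mul (c i)) ∧ ∀ i < t, IsIdealIn mul (c i) (c (i + 1))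

/-- `B` is nilpotent: `B^m = 0` for some `m`. -/
def IsNilpotentSub (mul : A →ₗ[F] A →ₗ[F] A) (B : Submodule F A) : Prop :=
  ∃ m, lcs mul B m = ⊥

/-- `B` is solvable: `B^{(m)} = 0` for some `m`. -/
def IsSolvableSub (mul : A →ₗ[F] A →ₗ[F] A) (B : Submodule F A) : Prop :=
  ∃ m, ds mul B m = ⊥

/-- The centralizer `Z_A(B) = {x : xb = 0 = bx for all b ∈ B}`. -/
def centralizerSet (mul : A →ₗ[F] A →ₗ[F] A) (B : Submodule F A) : Set A :=
  {x : A | ∀ b ∈ B, mul x b = 0 ∧ mul b x = 0}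

/-- `R` is the radical (the maximal solvable ideal) of the subalgebra `S`. -/
def IsRadicalIn (mul : A →ₗ[F] A →ₗ[F] A) (S R : Submodule F A) : Prop :=
  IsIdealIn mul R S ∧ IsSolvableSub mul R ∧
    ∀ T, IsIdealIn mul T S → IsSolvableSub mul T → T ≤ R

/-- `N` is the nilradical (the maximal nilpotent ideal) of the subalgebra `S`. -/
def IsNilradicalIn (mul : A →ₗ[F] A →ₗ[F] A) (S N : Submodule F A) : Prop :=
  IsIdealIn mul N S ∧ IsNilpotentSub mul N ∧
    ∀ T, IsIdealIn mul T S → IsNilpotentSub mul T → T ≤ N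

/-- `H` is a Cartan subalgebra: a nilpotent self-normalizing subalgebra. -/
def IsCartan (mul : A →ₗ[F] A →ₗ[F] A) (H : Submodule F A) : Prop :=
  IsSubalg mul H ∧ IsNilpotentSub mul H ∧
    ∀ x : A, (∀ h ∈ H, mul x h ∈ H ∧ mul h x ∈ H) → x ∈ H

/-- The subalgebra generated by a set: the smallest subalgebra containing it. -/
def subalgGen (mul : A →ₗ[F] A →ₗ[F] A) (s : Set A) : Submodule F A :=
  sInf {S : Submodule F A | IsSubalg mul S ∧ s ⊆ (S : Set A)}

end LeibnizDefs

/-!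
Set `L = A / R`, a Lie algebra with trivial radical, hence with nondegenerate Killing form, and let
`π : A → L` be the projection. A linear form `ξ` on `A` vanishing on `A·R + R·A` induces a bilinear
form `(π x, π y) ↦ ξ (x y)` on `L`, and the Leibniz identity says exactly that the resulting map
`L → L*` is a derivation. Through the Killing form `L* ≅ L`, so this derivation is inner, which
means that `ξ (x y) = f (π (x y))` for some linear form `f` on `L`. Thus `ξ` vanishes on `A² ∩ R`,
and since `ξ` was arbitrary, `A² ∩ R ≤ A·R + R·A`.
-/

section Whitehead

variable {F L : Type*} [Field F] [LieRing L] [LieAlgebra F L] [FiniteDimensional F L]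
  [LieAlgebra.IsKilling F L]

theorem exists_inner_eq_of_lieDerivation_dual (D : LieDerivation F L (Module.Dual F L)) :
    ∃ f : Module.Dual F L, LieDerivation.inner F L (Module.Dual F L) f = D := by
  let e : L ≃ₗ[F] Module.Dual F L := LinearMap.BilinForm.toDual (killingForm F L)
    (LieAlgebra.IsKilling.killingForm_nondegenerate F L)
  have e_lie (x u : L) : e ⁅x, u⁆ = ⁅x, e u⁆ := by
    ext v
    exact LieModule.traceForm_apply_lie_apply' F L L x u v
  let D' : LieDerivation F L L :=
    { toLinearMap := e.symm.toLinearMap ∘ₗ D.toLinearMap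
      leibniz' := fun x y ↦ e.injective (by simp [e_lie]) }
  obtain ⟨u, hu⟩ := LieDerivation.IsKilling.exists_eq_ad D'
  refine ⟨-e u, LieDerivation.ext fun x ↦ ?_⟩
  have eD' : e (D' x) = D x := e.apply_symm_apply (D x)
  rw [← eD', ← hu, LieDerivation.inner_apply_apply, lie_neg, ← e_lie, ← map_neg, lie_skew,
    LieDerivation.ad_apply_apply]

end Whitehead

section Leibniz

variable {F A L : Type*} [Field F] [AddCommGroup A] [Module F A] [LieRing L] [LieAlgebra F L]
  {mul : A →ₗ[F] A →ₗ[F] A}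

section Products

variable {B C D I S T : Submodule F A}

lemma mul_mem_mulSub {x y : A} (hx : x ∈ B) (hy : y ∈ C) : mul x y ∈ mulSub mul B C :=
  subset_span ⟨x, hx, y, hy, rfl⟩

lemma mulSub_le_iff : mulSub mul B C ≤ D ↔ ∀ x ∈ B, ∀ y ∈ C, mul x y ∈ D := by
  refine ⟨fun h x hx y hy ↦ h (mul_mem_mulSub hx hy), fun h ↦ span_le.mpr ?_⟩
  rintro _ ⟨x, hx, y, hy, rfl⟩
  exact h x hx y hy

lemma mulSub_mono {B' C' : Submodule F A} (hB : B ≤ B') (hC : C ≤ C') :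
    mulSub mul B C ≤ mulSub mul B' C' :=
  mulSub_le_iff.mpr fun _ hx _ hy ↦ mul_mem_mulSub (hB hx) (hC hy)

lemma fSub_le_mulSub_self (hIS : I ≤ S) : fSub mul S I ≤ mulSub mul S S :=
  sup_le (mulSub_mono le_rfl hIS) (mulSub_mono hIS le_rfl)

lemma IsIdealIn.fSub_le (hI : IsIdealIn mul I S) : fSub mul S I ≤ I :=
  sup_le (mulSub_le_iff.mpr fun x hx y hy ↦ (hI.2 x hx y hy).1)
    (mulSub_le_iff.mpr fun y hy x hx ↦ (hI.2 x hx y hy).2)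

lemma ds_succ_le_ds_of_mulSub_le (h : mulSub mul T T ≤ I) (n : ℕ) :
    ds mul T (n + 1) ≤ ds mul I n := by
  induction n with
  | zero => exact h
  | succ n ih => exact mulSub_mono ih ih

lemma IsRadicalIn.le_of_mulSub_le {R : Submodule F A} (hR : IsRadicalIn mul S R)
    (hT : IsIdealIn mul T S) (h : mulSub mul T T ≤ R) : T ≤ R := by
  obtain ⟨_, ⟨n, hn⟩, hmax⟩ := hR
  exact hmax T hT ⟨n + 1, eq_bot_iff.mpr (hn ▸ ds_succ_le_ds_of_mulSub_le h n)⟩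

end Products

section MapsToLieAlgebra

variable {π : A →ₗ[F] L} (hπ : ∀ x y, π (mul x y) = ⁅π x, π y⁆)

include hπ

lemma isIdealIn_comap (I : LieIdeal F L) : IsIdealIn mul (I.toSubmodule.comap π) ⊤ := by
  refine ⟨le_top, fun x _ y hy ↦ ⟨?_, ?_⟩⟩
  · rw [mem_comap, hπ]
    exact lie_mem_right F L I _ _ hy
  · rw [mem_comap, hπ]
    exact lie_mem_left F L I _ _ hy

lemma isIdealIn_ker : IsIdealIn mul (LinearMap.ker π) ⊤ := by
  simpa using isIdealIn_comap hπ ⊥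

lemma hasTrivialRadical_of_ker_isRadicalIn (hsurj : Function.Surjective π)
    (hker : IsRadicalIn mul ⊤ (LinearMap.ker π)) : LieAlgebra.HasTrivialRadical F L := by
  rw [LieAlgebra.hasTrivialRadical_iff_no_abelian_ideals]
  intro I hI
  have hsq : mulSub mul (I.toSubmodule.comap π) (I.toSubmodule.comap π) ≤ LinearMap.ker π := by
    refine mulSub_le_iff.mpr fun x hx y hy ↦ ?_
    rw [LinearMap.mem_ker, hπ]
    exact congrArg Subtype.val (hI.trivial ⟨π x, hx⟩ ⟨π y, hy⟩)
  have hle := hker.le_of_mulSub_le (isIdealIn_comap hπ I) hsq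
  refine (LieSubmodule.eq_bot_iff I).mpr fun u hu ↦ ?_
  obtain ⟨x, rfl⟩ := hsurj u
  exact hle hu

/-- The range of a multiplicative linear map from a nonassociative algebra to a Lie algebra, as a
Lie subalgebra of the target. -/
def lieRange : LieSubalgebra F L where
  __ := LinearMap.range π
  lie_mem' := by
    rintro _ _ ⟨x, rfl⟩ ⟨y, rfl⟩
    exact ⟨mul x y, hπ x y⟩

variable (hleib : ∀ x y z : A, mul x (mul y z) = mul (mul x y) z + mul y (mul x z))

include hleib

lemma exists_lieDerivation_dual_apply (hsurj : Function.Surjective π) {ξ : Module.Dual F A}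
    (hξ : fSub mul ⊤ (LinearMap.ker π) ≤ LinearMap.ker ξ) :
    ∃ D : LieDerivation F L (Module.Dual F L), ∀ x y, D (π x) (π y) = ξ (mul x y) := by
  obtain ⟨s, hs⟩ := π.exists_rightInverse_of_surjective (LinearMap.range_eq_top.mpr hsurj)
  let B : L →ₗ[F] Module.Dual F L := (mul.compl₁₂ s s).compr₂ ξ
  have section_sub_mem (x : A) : s (π x) - x ∈ LinearMap.ker π := by
    simpa [sub_eq_zero] using LinearMap.congr_fun hs (π x)
  have hB (x y : A) : B (π x) (π y) = ξ (mul x y) := by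
    have hl : ξ (mul (s (π x)) (s (π y) - y)) = 0 :=
      hξ (mem_sup_left (mul_mem_mulSub mem_top (section_sub_mem y)))
    have hr : ξ (mul (s (π x) - x) y) = 0 :=
      hξ (mem_sup_right (mul_mem_mulSub (section_sub_mem x) mem_top))
    rw [map_sub, map_sub, sub_eq_zero] at hl
    rw [map_sub, LinearMap.sub_apply, map_sub, sub_eq_zero] at hr
    exact hl.trans hr
  refine ⟨⟨B, fun u v ↦ LinearMap.ext fun w ↦ ?_⟩, hB⟩
  obtain ⟨x, rfl⟩ := hsurj u
  obtain ⟨y, rfl⟩ := hsurj v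
  obtain ⟨z, rfl⟩ := hsurj w
  simp only [LinearMap.sub_apply, Module.Dual.lie_apply, ← hπ, hB, hleib x y z, map_add]
  ring

lemma exists_dual_apply_mul [FiniteDimensional F L] [LieAlgebra.IsKilling F L]
    (hsurj : Function.Surjective π) {ξ : Module.Dual F A}
    (hξ : fSub mul ⊤ (LinearMap.ker π) ≤ LinearMap.ker ξ) :
    ∃ f : Module.Dual F L, ∀ x y, ξ (mul x y) = f (π (mul x y)) := by
  obtain ⟨D, hD⟩ := exists_lieDerivation_dual_apply hπ hleib hsurj hξ
  obtain ⟨f, rfl⟩ := exists_inner_eq_of_lieDerivation_dual D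
  refine ⟨-f, fun x y ↦ ?_⟩
  rw [← hD, LieDerivation.inner_apply_apply, Module.Dual.lie_apply, hπ, LinearMap.neg_apply]

theorem mulSub_top_inf_ker_le_fSub [FiniteDimensional F L] [LieAlgebra.IsKilling F L]
    (hsurj : Function.Surjective π) :
    mulSub mul ⊤ ⊤ ⊓ LinearMap.ker π ≤ fSub mul ⊤ (LinearMap.ker π) := by
  rintro z ⟨hz, hπz⟩
  by_contra hzf
  obtain ⟨ξ, hξz, hξ⟩ := exists_le_ker_of_notMem hzf
  obtain ⟨f, hf⟩ := exists_dual_apply_mul hπ hleib hsurj hξ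
  have hle : mulSub mul ⊤ ⊤ ≤ LinearMap.eqLocus ξ (f ∘ₗ π) :=
    mulSub_le_iff.mpr fun x _ y _ ↦ hf x y
  exact hξz <| (hle hz).trans <| by simp [LinearMap.mem_ker.mp hπz]

theorem mulSub_top_inf_ker_le_fSub_of_isRadicalIn [CharZero F]
    [FiniteDimensional F (LinearMap.range π)] (hker : IsRadicalIn mul ⊤ (LinearMap.ker π)) :
    mulSub mul ⊤ ⊤ ⊓ LinearMap.ker π ≤ fSub mul ⊤ (LinearMap.ker π) := by
  let π' : A →ₗ[F] lieRange hπ := π.rangeRestrict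
  have hπ' (x y : A) : π' (mul x y) = ⁅π' x, π' y⁆ := Subtype.ext (hπ x y)
  have hsurj : Function.Surjective π' := π.surjective_rangeRestrict
  have : FiniteDimensional F (lieRange hπ) := ‹FiniteDimensional F (LinearMap.range π)›
  have ker_eq : LinearMap.ker π' = LinearMap.ker π := π.ker_rangeRestrict
  rw [← ker_eq] at hker ⊢
  have : LieAlgebra.HasTrivialRadical F (lieRange hπ) :=
    hasTrivialRadical_of_ker_isRadicalIn hπ' hsurj hker
  exact mulSub_top_inf_ker_le_fSub hπ' hleib hsurj

end MapsToLieAlgebra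

section QuotientLeftMultiplication

attribute [local instance] LieRing.ofAssociativeRing

variable {I : Submodule F A} (hI : ∀ x, I ≤ I.comap (mul x))

/-- The left multiplication operators of `A` acting on the quotient by a left ideal `I`. When `I` is
the radical, the kernel is `I`, so the range is a model of the Lie algebra `A / I` that needs no
bracket on the quotient space. -/
def quotLeftMul : A →ₗ[F] Module.End F (A ⧸ I) :=
  I.mapQLinear I ∘ₗ mul.codRestrict (I.compatibleMaps I) hI

lemma quotLeftMul_mk (x y : A) : quotLeftMul hI x (I.mkQ y) = I.mkQ (mul x y) :=
  rfl

lemma mem_ker_quotLeftMul {x : A} : x ∈ LinearMap.ker (quotLeftMul hI) ↔ ∀ y, mul x y ∈ I := by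
  simp_rw [LinearMap.mem_ker, LinearMap.ext_iff, I.mkQ_surjective.forall, quotLeftMul_mk,
    LinearMap.zero_apply, mkQ_apply, Submodule.Quotient.mk_eq_zero]

variable (hleib : ∀ x y z : A, mul x (mul y z) = mul (mul x y) z + mul y (mul x z))

include hleib

lemma quotLeftMul_mul (x y : A) :
    quotLeftMul hI (mul x y) = ⁅quotLeftMul hI x, quotLeftMul hI y⁆ := by
  refine LinearMap.ext (I.mkQ_surjective.forall.mpr fun z ↦ ?_)
  simp only [Ring.lie_def, LinearMap.sub_apply, Module.End.mul_apply, quotLeftMul_mk]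
  rw [hleib, map_add, add_sub_cancel_right]

lemma IsRadicalIn.ker_quotLeftMul (hI_rad : IsRadicalIn mul ⊤ I) :
    LinearMap.ker (quotLeftMul hI) = I := by
  refine le_antisymm ?_ fun x hx ↦
    (mem_ker_quotLeftMul hI).mpr fun y ↦ (hI_rad.1.2 y mem_top x hx).2
  have hideal : IsIdealIn mul (LinearMap.ker (quotLeftMul hI)) ⊤ :=
    isIdealIn_ker (quotLeftMul_mul hI hleib)
  exact hI_rad.le_of_mulSub_le hideal <|
    mulSub_le_iff.mpr fun x hx y _ ↦ (mem_ker_quotLeftMul hI).mp hx y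

theorem IsRadicalIn.mulSub_top_inf_le_fSub [CharZero F] [FiniteDimensional F (A ⧸ I)]
    (hI_rad : IsRadicalIn mul ⊤ I) : mulSub mul ⊤ ⊤ ⊓ I ≤ fSub mul ⊤ I := by
  have hleft (x : A) : I ≤ I.comap (mul x) := fun y hy ↦ (hI_rad.1.2 x mem_top y hy).1
  have ker_eq := hI_rad.ker_quotLeftMul hleft hleib
  have hker : IsRadicalIn mul ⊤ (LinearMap.ker (quotLeftMul hleft)) := ker_eq.symm ▸ hI_rad
  simpa only [ker_eq] using
    mulSub_top_inf_ker_le_fSub_of_isRadicalIn (quotLeftMul_mul hleft hleib) hleib hker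

end QuotientLeftMultiplication

end Leibniz

theorem stmt_10_general {F A : Type*} [Field F] [CharZero F] [AddCommGroup A] [Module F A]
    (mul : A →ₗ[F] A →ₗ[F] A)
    (hleib : ∀ x y z : A, mul x (mul y z) = mul (mul x y) z + mul y (mul x z))
    (R : Submodule F A) (hR : IsRadicalIn mul ⊤ R) [FiniteDimensional F (A ⧸ R)] :
    mulSub mul ⊤ ⊤ ⊓ R = fSub mul ⊤ R :=
  le_antisymm (hR.mulSub_top_inf_le_fSub hleib) (le_inf (fSub_le_mulSub_self le_top) hR.1.fSub_le)

/-- over characteristic zero, `A² ∩ R = A·R + R·A` where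
`R = rad(A)`. -/
theorem stmt_10 {F A : Type*} [Field F] [CharZero F]
    [AddCommGroup A] [Module F A] [FiniteDimensional F A]
    (mul : A →ₗ[F] A →ₗ[F] A)
    (hleib : ∀ x y z : A, mul x (mul y z) = mul (mul x y) z + mul y (mul x z))
    (R : Submodule F A) (hR : IsRadicalIn mul ⊤ R) :
    mulSub mul ⊤ ⊤ ⊓ R = fSub mul ⊤ R :=
  stmt_10_general mul hleib R hR
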